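/- Let h(x) = Q₁(x) − Q₂(Ax), where Q₁: ℝⁿ → ℝ ∪ {∞} is proper and closed, Q₂: ℝᵐ → ℝ is convex with ∇Q₂ globally Lipschitz continuous, and A: ℝⁿ → ℝᵐ is linear. Suppose h satisfies the KL property at x̄ ∈ dom ∂h with exponent 1/2. Then the function H(x, y) = Q₁(x) − ⟨Ax, y⟩ + Q₂*(y) satisfies the KL property at (x̄, ∇Q₂(Ax̄)) ∈ dom ∂H with exponent 1/2. -/

import Mathlib

/-!
Fenchel–Young gives `H(x, y) ≥ h(x)` with equality at `y = ∇Q₂(Ax)`, so a Fréchet subgradient `v` of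
`h` at `x` lifts to the subgradient `(v, 0)` of `H` at `(x, ∇Q₂(Ax))`. Passing to limits, `∂H` is
nonempty at `(x̄, ∇Q₂(Ax̄))`.

Conversely, let `w = (w₁, w₂)` be a Fréchet subgradient of `H` at `(x, y)`, where `H` is finite.
Then `u = Ax + w₂` is a subgradient of the convex function `Q₂*` at `y`, so `y = ∇Q₂(u)` and, with
`K` a Lipschitz constant of `∇Q₂`, `‖y - ∇Q₂(Ax)‖ ≤ K‖w₂‖`. Hence `w₁ + Aᵀ(y - ∇Q₂(Ax))` is a
Fréchet subgradient of `h` at `x` of norm `O(‖w‖)`, and `H(x, y) - h(x) ≤ ⟨w₂, y - ∇Q₂(Ax)⟩ =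
O(‖w‖²)`. The error bound `(h - h(x̄)) ^ α = O(‖v‖)` thus passes to `H` as soon as a gap of order
`‖w‖²` has `α`-th power `O(‖w‖)`, that is for `α ≥ 1/2`.
-/

open Filter Topology Set Metric Bornology
open scoped RealInnerProductSpace

noncomputable section

abbrev Eucl (n : ℕ) := EuclideanSpace ℝ (Fin n)

variable {H : Type*} [NormedAddCommGroup H] [InnerProductSpace ℝ H]

/-- Fréchet (regular) subgradient of an extended-real-valued function. -/
def FrechetSubgradAt (h : H → EReal) (v x : H) : Prop :=
  ∀ ε : ℝ, 0 < ε →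
    ∀ᶠ y in 𝓝[≠] x, h x + ((⟪v, y - x⟫ - ε * ‖y - x‖ : ℝ) : EReal) ≤ h y

/-- Limiting (Mordukhovich) subdifferential. -/
def limSubdiff (h : H → EReal) (x : H) : Set H :=
  {v | ∃ xs vs : ℕ → H,
    Tendsto xs atTop (𝓝 x) ∧
    Tendsto (fun k => h (xs k)) atTop (𝓝 (h x)) ∧
    Tendsto vs atTop (𝓝 v) ∧
    ∀ k, FrechetSubgradAt h (vs k) (xs k)}

/-- Convex subgradient of a real-valued function. -/
def ConvexSubgradAt (g : H → ℝ) (v x : H) : Prop :=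
  ∀ y, g x + ⟪v, y - x⟫ ≤ g y

/-- Convex subgradient of an extended-real-valued function. -/
def ConvexSubgradAtE (g : H → EReal) (v x : H) : Prop :=
  ∀ y, g x + ((⟪v, y - x⟫ : ℝ) : EReal) ≤ g y

/-- Convex conjugate of a real-valued function. -/
def conjE (g : H → ℝ) (y : H) : EReal :=
  ⨆ x : H, ((⟪x, y⟫ - g x : ℝ) : EReal)

/-- `P` is proper, closed (lsc) and convex. -/
def ProperClosedConvexE (P : H → EReal) : Prop :=
  (∀ x, P x ≠ ⊥) ∧ (∃ x, P x ≠ ⊤) ∧ LowerSemicontinuous P ∧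
  (∀ x y : H, ∀ t : ℝ, t ∈ Ioo (0:ℝ) 1 →
    P (t • x + (1 - t) • y) ≤ (t : EReal) * P x + ((1 - t : ℝ) : EReal) * P y)

/-- KL property with exponent `α` at a point. -/
def KLExpAt (h : H → EReal) (α : ℝ) (x₀ : H) : Prop :=
  ∃ c > (0:ℝ), ∃ ε > (0:ℝ), ∃ a > (0:ℝ), ∀ x : H,
    ‖x - x₀‖ ≤ ε → h x₀ < h x → h x < h x₀ + (a : EReal) →
    (limSubdiff h x).Nonempty →
    1 ≤ c * (1 - α) * ((h x).toReal - (h x₀).toReal) ^ (-α) * infDist 0 (limSubdiff h x)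

/-- KL function with exponent `α`. -/
def IsKLWithExp (h : H → EReal) (α : ℝ) : Prop :=
  ∀ x₀ : H, (limSubdiff h x₀).Nonempty → KLExpAt h α x₀

/-- KL property (general desingularizing function) at a point. -/
def KLAt (h : H → EReal) (x₀ : H) : Prop :=
  ∃ a > (0:ℝ), ∃ U ∈ 𝓝 x₀, ∃ φ φd : ℝ → ℝ,
    ContinuousOn φ (Ico 0 a) ∧ ConcaveOn ℝ (Ico 0 a) φ ∧ φ 0 = 0 ∧
    (∀ s ∈ Ico (0:ℝ) a, 0 ≤ φ s) ∧
    (∀ s ∈ Ioo (0:ℝ) a, HasDerivAt φ (φd s) s ∧ 0 < φd s) ∧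
    ∀ x ∈ U, h x₀ < h x → h x < h x₀ + (a : EReal) → (limSubdiff h x).Nonempty →
      1 ≤ φd ((h x).toReal - (h x₀).toReal) * infDist 0 (limSubdiff h x)

/-- KL function. -/
def IsKLFun (h : H → EReal) : Prop :=
  ∀ x₀ : H, (limSubdiff h x₀).Nonempty → KLAt h x₀

/-- The potential function `E(x,y,w) = f(x) + P₁(x) - ⟨x,y⟩ + P₂*(y) + L/2 ‖x-w‖²`. -/
def potE (f : H → ℝ) (P₁ : H → EReal) (P₂ : H → ℝ) (L : ℝ) (x y w : H) : EReal :=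
  ((f x : ℝ) : EReal) + P₁ x - ((⟪x, y⟫ : ℝ) : EReal) + conjE P₂ y
    + ((L / 2 * ‖x - w‖ ^ 2 : ℝ) : EReal)

/-- The pDCAe iteration: `ξ^{k+1} ∈ ∂P₂(x^k)`, `u^k = x^k + β_k (x^k - x^{k-1})` and
`x^{k+1}` is the minimizer of `⟨∇f(u^k) - ξ^{k+1}, ·⟩ + L/2 ‖· - u^k‖² + P₁(·)`.
(`x⁻¹ = x⁰` is encoded by truncated subtraction in `ℕ`.) -/
def IsPDCAe (f' : H → H) (P₁ : H → EReal) (P₂ : H → ℝ) (L : ℝ) (β : ℕ → ℝ)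
    (x ξ : ℕ → H) : Prop :=
  P₁ (x 0) ≠ ⊤ ∧
  (∀ k : ℕ, ConvexSubgradAt P₂ (ξ (k + 1)) (x k)) ∧
  (∀ k : ℕ, ∀ z : H,
    ((⟪f' (x k + β k • (x k - x (k - 1))) - ξ (k + 1), x (k + 1)⟫
        + L / 2 * ‖x (k + 1) - (x k + β k • (x k - x (k - 1)))‖ ^ 2 : ℝ) : EReal)
      + P₁ (x (k + 1))
      ≤ ((⟪f' (x k + β k • (x k - x (k - 1))) - ξ (k + 1), z⟫
        + L / 2 * ‖z - (x k + β k • (x k - x (k - 1)))‖ ^ 2 : ℝ) : EReal) + P₁ z)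

/-- Triples `(x, y, w)` with the ℓ² product inner product structure. -/
abbrev Trip (n : ℕ) := WithLp 2 (Eucl n × WithLp 2 (Eucl n × Eucl n))

def mkTrip {n : ℕ} (a b c : Eucl n) : Trip n :=
  (WithLp.equiv 2 _).symm (a, (WithLp.equiv 2 _).symm (b, c))

/-- `potE` as a function on triples. -/
def potE3 {n : ℕ} (f : Eucl n → ℝ) (P₁ : Eucl n → EReal) (P₂ : Eucl n → ℝ) (L : ℝ)
    (p : Trip n) : EReal :=
  potE f P₁ P₂ L ((WithLp.equiv 2 _) p).1 ((WithLp.equiv 2 _) ((WithLp.equiv 2 _) p).2).1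
    ((WithLp.equiv 2 _) ((WithLp.equiv 2 _) p).2).2

/-- Pairs `(x, y)` with the ℓ² product inner product structure. -/
abbrev Pr (n m : ℕ) := WithLp 2 (Eucl n × Eucl m)

def mkPr {n m : ℕ} (a : Eucl n) (b : Eucl m) : Pr n m :=
  (WithLp.equiv 2 _).symm (a, b)

/-- `h(x) = Q₁(x) - Q₂(A x)`. -/
def hFun {n m : ℕ} (Q₁ : Eucl n → EReal) (Q₂ : Eucl m → ℝ)
    (A : Eucl n →ₗ[ℝ] Eucl m) (x : Eucl n) : EReal :=
  Q₁ x - ((Q₂ (A x) : ℝ) : EReal)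

/-- `H(x, y) = Q₁(x) - ⟨A x, y⟩ + Q₂*(y)`. -/
def HFun {n m : ℕ} (Q₁ : Eucl n → EReal) (Q₂ : Eucl m → ℝ)
    (A : Eucl n →ₗ[ℝ] Eucl m) (p : Pr n m) : EReal :=
  Q₁ ((WithLp.equiv 2 _) p).1
    - ((⟪A ((WithLp.equiv 2 _) p).1, ((WithLp.equiv 2 _) p).2⟫ : ℝ) : EReal)
    + conjE Q₂ ((WithLp.equiv 2 _) p).2

lemma ne_bot_of_lt_add {s t c : EReal} (h : t < s + c) : s ≠ ⊥ := by
  rintro rfl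
  simp at h

lemma sub_coe_add_coe (s : EReal) (a b : ℝ) :
    s - (a : EReal) + (b : EReal) = s - ((a - b : ℝ) : EReal) := by
  rw [sub_eq_add_neg, sub_eq_add_neg, add_assoc, ← EReal.coe_neg, ← EReal.coe_neg,
    ← EReal.coe_add]
  congr 2
  ring

lemma toReal_sub_toReal_pos {s t : EReal} {a : ℝ} (hst : s < t) (hta : t < s + (a : EReal)) :
    0 < t.toReal - s.toReal := by
  lift t to ℝ using ⟨hta.ne_top, hst.ne_bot⟩
  lift s to ℝ using ⟨hst.ne_top, ne_bot_of_lt_add hta⟩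
  exact sub_pos.2 (by exact_mod_cast hst)

lemma rpow_le_mul_of_le_mul_sq {s a K r α : ℝ} (hs : 0 ≤ s) (hsa : s ≤ a) (hr : 0 ≤ r)
    (hK : 0 ≤ K) (hsK : s ≤ K * r ^ 2) (hα : 1 / 2 ≤ α) :
    s ^ α ≤ a ^ (α - 1 / 2) * √K * r := by
  have ha : 0 ≤ a := hs.trans hsa
  calc s ^ α = s ^ (α - 1 / 2) * √s := by
        rw [Real.sqrt_eq_rpow, ← Real.rpow_add_of_nonneg hs (by linarith) (by norm_num)]
        ring_nf
    _ ≤ a ^ (α - 1 / 2) * √(K * r ^ 2) := by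
        gcongr
    _ = a ^ (α - 1 / 2) * √K * r := by rw [Real.sqrt_mul hK, Real.sqrt_sq hr, mul_assoc]

lemma rpow_le_of_sub_le_mul_sq {s t a B K r α : ℝ} (hs : 0 ≤ s) (hts : t ≤ s) (hsa : s ≤ a)
    (hr : 0 ≤ r) (hB : 0 ≤ B) (hK : 0 ≤ K) (hα : 1 / 2 ≤ α) (hα' : α ≤ 1)
    (hgap : s - t ≤ K * r ^ 2) (ht : 0 < t → t ^ α ≤ B * r) :
    s ^ α ≤ (B + a ^ (α - 1 / 2) * √K) * r := by
  rw [add_mul]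
  rcases lt_or_ge 0 t with htpos | htneg
  · calc s ^ α = (t + (s - t)) ^ α := by rw [add_sub_cancel]
      _ ≤ t ^ α + (s - t) ^ α :=
        Real.rpow_add_le_add_rpow htpos.le (sub_nonneg.2 hts) (by linarith) hα'
      _ ≤ B * r + a ^ (α - 1 / 2) * √K * r :=
        add_le_add (ht htpos)
          (rpow_le_mul_of_le_mul_sq (sub_nonneg.2 hts) (by linarith) hr hK hgap hα)
  · have hsα := rpow_le_mul_of_le_mul_sq hs hsa hr hK (by linarith) hα
    linarith [mul_nonneg hB hr]

lemma one_le_mul_rpow_neg_mul_iff {b s α D : ℝ} (hs : 0 < s) :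
    1 ≤ b * s ^ (-α) * D ↔ s ^ α ≤ b * D := by
  rw [Real.rpow_neg hs.le, mul_right_comm, ← div_eq_mul_inv, one_le_div (Real.rpow_pos_of_pos hs α)]

lemma rpow_toReal_sub_le_of_le_add {f₀ f g : EReal} {a B K r α : ℝ} (hlow : f₀ < g)
    (hhigh : g < f₀ + (a : EReal)) (hfg : f ≤ g) (hgf : g ≤ f + ((K * r ^ 2 : ℝ) : EReal))
    (hr : 0 ≤ r) (hB : 0 ≤ B) (hK : 0 ≤ K) (hα : α ∈ Ico (1 / 2) 1)
    (hf : f₀ < f → f < f₀ + (a : EReal) → (f.toReal - f₀.toReal) ^ α ≤ B * r) :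
    (g.toReal - f₀.toReal) ^ α ≤ (B + a ^ (α - 1 / 2) * √K) * r := by
  have hpos := toReal_sub_toReal_pos hlow hhigh
  lift g to ℝ using ⟨hhigh.ne_top, hlow.ne_bot⟩
  lift f to ℝ using ⟨(hfg.trans_lt (EReal.coe_lt_top g)).ne, ne_bot_of_lt_add (hlow.trans_le hgf)⟩
  lift f₀ to ℝ using ⟨hlow.ne_top, ne_bot_of_lt_add hhigh⟩
  simp only [EReal.toReal_coe] at hf hpos ⊢
  norm_cast at hlow hhigh hfg hgf hf
  exact rpow_le_of_sub_le_mul_sq hpos.le (by linarith) (by linarith) hr hB hK hα.1 hα.2.le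
    (by linarith) fun ht => hf (by linarith) (by linarith)

section FrechetSubgradients

variable {E G : Type*} [NormedAddCommGroup E] [InnerProductSpace ℝ E]
  [NormedAddCommGroup G] [InnerProductSpace ℝ G] {f g : E → EReal} {v x : E}

lemma frechetSubgradAt_iff_nhds : FrechetSubgradAt f v x ↔ ∀ ε : ℝ, 0 < ε →
    ∀ᶠ y in 𝓝 x, f x + ((⟪v, y - x⟫ - ε * ‖y - x‖ : ℝ) : EReal) ≤ f y := by
  refine forall₂_congr fun ε _ => ⟨fun h => ?_, fun h => h.filter_mono nhdsWithin_le_nhds⟩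
  filter_upwards [eventually_nhdsWithin_iff.1 h] with y hy
  rcases eq_or_ne y x with rfl | hyx
  · simp
  · exact hy hyx

lemma FrechetSubgradAt.mem_limSubdiff (h : FrechetSubgradAt f v x) : v ∈ limSubdiff f x :=
  ⟨fun _ => x, fun _ => v, tendsto_const_nhds, tendsto_const_nhds, tendsto_const_nhds, fun _ => h⟩

lemma FrechetSubgradAt.of_le (h : FrechetSubgradAt f v x) (hfg : ∀ y, f y ≤ g y)
    (hx : g x = f x) : FrechetSubgradAt g v x := fun ε hε =>
  (h ε hε).mono fun y hy => by rw [hx]; exact hy.trans (hfg y)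

lemma FrechetSubgradAt.comp_nonexpansive {f : G → EReal} {φ : E → G} {w : G}
    (h : FrechetSubgradAt f w (φ x)) (hφ : LipschitzWith 1 φ)
    (hv : ∀ y, ⟪v, y - x⟫ = ⟪w, φ y - φ x⟫) : FrechetSubgradAt (fun y => f (φ y)) v x := by
  refine frechetSubgradAt_iff_nhds.2 fun ε hε => ?_
  filter_upwards [hφ.continuous.continuousAt.eventually (frechetSubgradAt_iff_nhds.1 h ε hε)]
    with y hy
  have hnorm : ‖φ y - φ x‖ ≤ ‖y - x‖ := by simpa using hφ.norm_sub_le y x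
  refine le_trans ?_ hy
  rw [hv]
  gcongr

lemma FrechetSubgradAt.add_hasGradientAt [CompleteSpace E] {u : E} {φ : E → ℝ}
    (h : FrechetSubgradAt f v x) (hφ : HasGradientAt φ u x) :
    FrechetSubgradAt (fun y => f y + (φ y : EReal)) (v + u) x := by
  intro ε hε
  have hsmooth := (hasGradientAt_iff_isLittleO.1 hφ).def (half_pos hε)
  filter_upwards [h (ε / 2) (half_pos hε), hsmooth.filter_mono nhdsWithin_le_nhds] with y hf hφy
  have hlow : φ x + (⟪u, y - x⟫ - ε / 2 * ‖y - x‖) ≤ φ y := by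
    linarith [(abs_le.1 hφy).1]
  calc f x + (φ x : EReal) + ((⟪v + u, y - x⟫ - ε * ‖y - x‖ : ℝ) : EReal)
      = f x + ((⟪v, y - x⟫ - ε / 2 * ‖y - x‖ : ℝ) : EReal)
          + ((φ x + (⟪u, y - x⟫ - ε / 2 * ‖y - x‖) : ℝ) : EReal) := by
        rw [add_assoc, add_assoc, ← EReal.coe_add, ← EReal.coe_add, inner_add_left]
        congr 2
        ring
    _ ≤ f y + (φ y : EReal) := add_le_add hf (by exact_mod_cast hlow)

/-- Testing the Fréchet inequality on the segment towards `y`, where convexity bounds `f` from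
above by its chord, makes the inequality global. -/
lemma FrechetSubgradAt.inner_le_sub (h : FrechetSubgradAt f v x)
    (hf : Convex ℝ {p : E × ℝ | f p.1 ≤ p.2}) {y : E} {k c : ℝ} (hx : f x = k) (hy : f y ≤ c) :
    ⟪v, y - x⟫ ≤ c - k := by
  have hslope : ∀ ε : ℝ, 0 < ε → ⟪v, y - x⟫ - ε * ‖y - x‖ ≤ c - k := by
    intro ε hε
    have hseg : Tendsto (fun t : ℝ => x + t • (y - x)) (𝓝[>] 0) (𝓝 x) := by
      have hcont : Continuous fun t : ℝ => x + t • (y - x) := by fun_prop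
      simpa using (hcont.tendsto 0).mono_left nhdsWithin_le_nhds
    obtain ⟨t, hlow, ht₀, ht₁⟩ := ((hseg.eventually (frechetSubgradAt_iff_nhds.1 h ε hε)).and
      (Ioo_mem_nhdsGT one_pos)).exists
    have hchord : f (x + t • (y - x)) ≤ ((k + t * (c - k) : ℝ) : EReal) :=
      hf.add_smul_sub_mem (x := (x, k)) (y := (y, c)) hx.le hy ⟨ht₀.le, ht₁.le⟩
    have hreal := hlow.trans hchord
    rw [hx, add_sub_cancel_left, inner_smul_right, norm_smul, Real.norm_of_nonneg ht₀.le,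
      ← EReal.coe_add, EReal.coe_le_coe_iff] at hreal
    refine le_of_mul_le_mul_left ?_ ht₀
    linarith
  have hlim : Tendsto (fun ε : ℝ => ⟪v, y - x⟫ - ε * ‖y - x‖) (𝓝[>] 0) (𝓝 ⟪v, y - x⟫) := by
    have hcont : Continuous fun ε : ℝ => ⟪v, y - x⟫ - ε * ‖y - x‖ := by fun_prop
    simpa using (hcont.tendsto 0).mono_left nhdsWithin_le_nhds
  exact le_of_tendsto hlim (eventually_mem_nhdsWithin.mono hslope)

lemma FrechetSubgradAt.convexSubgradAtE (h : FrechetSubgradAt f v x) (hx : f x ≠ ⊤)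
    (hf : Convex ℝ {p : E × ℝ | f p.1 ≤ p.2}) : ConvexSubgradAtE f v x := by
  intro y
  induction hfx : f x with
  | bot => simp
  | top => exact absurd hfx hx
  | coe k =>
    refine EReal.le_of_forall_lt_iff_le.1 fun c hc => ?_
    exact_mod_cast le_sub_iff_add_le'.1 (h.inner_le_sub hf hfx hc.le)

end FrechetSubgradients

section Conjugate

variable {F : Type*} [NormedAddCommGroup F] [InnerProductSpace ℝ F] {Q : F → ℝ} {u v y : F}

lemma conjE_le_coe_iff {c : ℝ} : conjE Q y ≤ (c : EReal) ↔ ∀ z, ⟪z, y⟫ - Q z ≤ c := by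
  simp only [conjE, iSup_le_iff, EReal.coe_le_coe_iff]

lemma le_conjE (Q : F → ℝ) (y z : F) : ((⟪z, y⟫ - Q z : ℝ) : EReal) ≤ conjE Q y :=
  le_iSup (fun z : F => ((⟪z, y⟫ - Q z : ℝ) : EReal)) z

lemma conjE_ne_bot (Q : F → ℝ) (y : F) : conjE Q y ≠ ⊥ :=
  ((EReal.bot_lt_coe _).trans_le (le_conjE Q y 0)).ne'

lemma convex_epigraph_conjE (Q : F → ℝ) : Convex ℝ {p : F × ℝ | conjE Q p.1 ≤ p.2} := by
  simp only [conjE_le_coe_iff, ofPred_forall]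
  refine convex_iInter fun z => ?_
  have hlin : IsLinearMap ℝ fun p : F × ℝ => ⟪z, p.1⟫ - p.2 :=
    ((innerₛₗ ℝ z).comp (LinearMap.fst ℝ F ℝ) - LinearMap.snd ℝ F ℝ).isLinear
  simpa only [sub_le_comm] using convex_halfSpace_le hlin (Q z)

lemma convexSubgradAt_iff_conjE_le :
    ConvexSubgradAt Q y u ↔ conjE Q y ≤ ((⟪u, y⟫ - Q u : ℝ) : EReal) := by
  rw [conjE_le_coe_iff]
  refine forall_congr' fun z => ?_
  rw [inner_sub_right, real_inner_comm z, real_inner_comm u]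
  constructor <;> intro h <;> linarith

lemma ConvexSubgradAt.conjE_eq (h : ConvexSubgradAt Q y u) :
    conjE Q y = ((⟪u, y⟫ - Q u : ℝ) : EReal) :=
  le_antisymm (convexSubgradAt_iff_conjE_le.1 h) (le_conjE Q y u)

lemma ConvexSubgradAtE.convexSubgradAt_of_conjE (h : ConvexSubgradAtE (conjE Q) u y)
    (hv : ConvexSubgradAt Q v u) : ConvexSubgradAt Q y u := by
  rw [convexSubgradAt_iff_conjE_le]
  have htest := h v
  rw [hv.conjE_eq, inner_sub_right] at htest
  induction hy : conjE Q y with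
  | bot => exact absurd hy (conjE_ne_bot Q y)
  | top =>
    rw [hy, EReal.top_add_coe, top_le_iff] at htest
    exact absurd htest (EReal.coe_ne_top _)
  | coe k =>
    rw [hy] at htest
    norm_cast at htest ⊢
    linarith

variable [CompleteSpace F]

lemma ConvexSubgradAt.eq_of_hasGradientAt (h : ConvexSubgradAt Q y u)
    (hv : HasGradientAt Q v u) : y = v := by
  have hmin : IsLocalMin (fun z => Q z - ⟪y, z⟫) u := Eventually.of_forall fun z => by
    have := h z
    rw [inner_sub_right] at this
    linarith
  have hder := hmin.hasFDerivAt_eq_zero (hv.hasFDerivAt.sub (innerSL ℝ y).hasFDerivAt)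
  exact ((InnerProductSpace.toDual ℝ F).injective (sub_eq_zero.1 hder)).symm

lemma convexSubgradAt_of_convexOn (hQ : ConvexOn ℝ univ Q) (hv : HasGradientAt Q v u) :
    ConvexSubgradAt Q v u := by
  have hzero : FrechetSubgradAt (fun _ : F => (0 : EReal)) 0 u := fun ε hε =>
    Eventually.of_forall fun z => by
      have : 0 ≤ ε * ‖z - u‖ := by positivity
      simp only [inner_zero_left, zero_add]
      exact_mod_cast (by linarith : 0 - ε * ‖z - u‖ ≤ 0)
  have hQE := (hzero.add_hasGradientAt hv).convexSubgradAtE (by simp)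
    (by simpa using hQ.convex_epigraph)
  intro z
  have := hQE z
  simp only [zero_add] at this
  exact_mod_cast this

end Conjugate

section KLExponent

variable {E : Type*} [NormedAddCommGroup E] [InnerProductSpace ℝ E] {f : E → EReal} {α : ℝ} {x₀ : E}

/-- The KL inequality with exponent `α` at `x₀`, tested on Fréchet instead of limiting subgradients
and written as the error bound `(f x - f x₀) ^ α ≤ C * ‖v‖`. For `α < 1` it is equivalent to
`KLExpAt`, and it spares the passage to the limit when a subgradient of one function is turned into
one of another. -/
def FrechetKLExpAt (f : E → EReal) (α : ℝ) (x₀ : E) : Prop :=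
  ∃ C > (0 : ℝ), ∃ ε > (0 : ℝ), ∃ a > (0 : ℝ), ∀ x v : E,
    ‖x - x₀‖ ≤ ε → f x₀ < f x → f x < f x₀ + (a : EReal) → FrechetSubgradAt f v x →
    ((f x).toReal - (f x₀).toReal) ^ α ≤ C * ‖v‖

lemma KLExpAt.frechetKLExpAt (hf : KLExpAt f α x₀) (hα : α < 1) : FrechetKLExpAt f α x₀ := by
  obtain ⟨c, hc, ε, hε, a, ha, hKL⟩ := hf
  have hC : 0 < c * (1 - α) := mul_pos hc (sub_pos.2 hα)
  refine ⟨c * (1 - α), hC, ε, hε, a, ha, fun x v hx hlow hhigh hv => ?_⟩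
  have hdist : infDist 0 (limSubdiff f x) ≤ ‖v‖ := by
    simpa using infDist_le_dist_of_mem (x := 0) hv.mem_limSubdiff
  calc ((f x).toReal - (f x₀).toReal) ^ α ≤ c * (1 - α) * infDist 0 (limSubdiff f x) :=
        (one_le_mul_rpow_neg_mul_iff (toReal_sub_toReal_pos hlow hhigh)).1
          (hKL x hx hlow hhigh ⟨v, hv.mem_limSubdiff⟩)
    _ ≤ c * (1 - α) * ‖v‖ := by gcongr

/-- Halving the radius keeps the sequences that define limiting subgradients inside the ball. -/
lemma FrechetKLExpAt.klExpAt (hf : FrechetKLExpAt f α x₀) (hα : α < 1) : KLExpAt f α x₀ := by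
  obtain ⟨C, hC, ε, hε, a, ha, hbound⟩ := hf
  have hα' : 0 < 1 - α := sub_pos.2 hα
  refine ⟨C / (1 - α), by positivity, ε / 2, by positivity, a, ha,
    fun x hx hlow hhigh hne => ?_⟩
  have hpos := toReal_sub_toReal_pos hlow hhigh
  rw [div_mul_cancel₀ C hα'.ne', one_le_mul_rpow_neg_mul_iff hpos, ← div_le_iff₀' hC,
    le_infDist hne]
  rintro v ⟨xs, vs, hxs, hfs, hvs, hsub⟩
  rw [dist_zero_left, div_le_iff₀' hC]
  have hgap : Tendsto (fun k => ((f (xs k)).toReal - (f x₀).toReal) ^ α) atTop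
      (𝓝 (((f x).toReal - (f x₀).toReal) ^ α)) :=
    (((EReal.tendsto_toReal hhigh.ne_top hlow.ne_bot).comp hfs).sub_const _).rpow_const
      (Or.inl hpos.ne')
  have hball : ∀ᶠ k in atTop, ‖xs k - x₀‖ < ε :=
    (hxs.sub_const x₀).norm.eventually_lt_const (by linarith)
  refine le_of_tendsto_of_tendsto hgap (hvs.norm.const_mul C) ?_
  filter_upwards [hball, hfs.eventually_const_lt hlow, hfs.eventually_lt_const hhigh]
    with k hk hklow hkhigh
  exact hbound (xs k) (vs k) hk.le hklow hkhigh (hsub k)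

end KLExponent

section ProductSlices

variable {E F : Type*} [SeminormedAddCommGroup E] [SeminormedAddCommGroup F]

lemma isometry_toLp_left (y : F) : Isometry fun x : E => WithLp.toLp 2 (x, y) :=
  Isometry.of_dist_eq fun x x' => by
    rw [dist_eq_norm, dist_eq_norm, ← WithLp.toLp_sub, Prod.mk_sub_mk, sub_self,
      WithLp.norm_toLp_fst]

lemma isometry_toLp_right (x : E) : Isometry fun y : F => WithLp.toLp 2 (x, y) :=
  Isometry.of_dist_eq fun y y' => by
    rw [dist_eq_norm, dist_eq_norm, ← WithLp.toLp_sub, Prod.mk_sub_mk, sub_self,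
      WithLp.norm_toLp_snd]

end ProductSlices

section DCMajorant

variable {E F : Type*} [NormedAddCommGroup E] [InnerProductSpace ℝ E]
  [NormedAddCommGroup F] [InnerProductSpace ℝ F]

/-- The difference function `Q₁ - Q₂ ∘ A`; `hFun` is the case of Euclidean spaces. -/
def dcFun (Q₁ : E → EReal) (Q₂ : F → ℝ) (A : E →L[ℝ] F) (x : E) : EReal :=
  Q₁ x - (Q₂ (A x) : EReal)

/-- The function `(x, y) ↦ Q₁ x - ⟪A x, y⟫ + Q₂* y`, which majorizes `dcFun Q₁ Q₂ A` at `x` for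
every `y`; `HFun` is the case of Euclidean spaces. -/
def dcMajorant (Q₁ : E → EReal) (Q₂ : F → ℝ) (A : E →L[ℝ] F) (p : WithLp 2 (E × F)) : EReal :=
  Q₁ p.fst - ((⟪A p.fst, p.snd⟫ : ℝ) : EReal) + conjE Q₂ p.snd

variable {Q₁ : E → EReal} {Q₂ : F → ℝ} {A : E →L[ℝ] F} {q : F → F}

lemma dcFun_le_dcMajorant (p : WithLp 2 (E × F)) :
    dcFun Q₁ Q₂ A p.fst ≤ dcMajorant Q₁ Q₂ A p := by
  calc dcFun Q₁ Q₂ A p.fst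
      = Q₁ p.fst - ((⟪A p.fst, p.snd⟫ : ℝ) : EReal)
          + ((⟪A p.fst, p.snd⟫ - Q₂ (A p.fst) : ℝ) : EReal) := by
        rw [sub_coe_add_coe, sub_sub_cancel, dcFun]
    _ ≤ dcMajorant Q₁ Q₂ A p := add_le_add_right (le_conjE Q₂ p.snd (A p.fst)) _

lemma dcMajorant_eq_dcFun {x : E} {y : F} (hy : ConvexSubgradAt Q₂ y (A x)) :
    dcMajorant Q₁ Q₂ A (WithLp.toLp 2 (x, y)) = dcFun Q₁ Q₂ A x := by
  simp only [dcMajorant, WithLp.toLp_fst, WithLp.toLp_snd]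
  rw [hy.conjE_eq, sub_coe_add_coe, sub_sub_cancel, dcFun]

lemma dcMajorant_le_dcFun_add {p : WithLp 2 (E × F)} {u v : F}
    (hy : ConvexSubgradAt Q₂ p.snd u) (hv : ConvexSubgradAt Q₂ v (A p.fst)) :
    dcMajorant Q₁ Q₂ A p ≤
      dcFun Q₁ Q₂ A p.fst + ((⟪u - A p.fst, p.snd - v⟫ : ℝ) : EReal) := by
  rw [dcMajorant, dcFun, hy.conjE_eq, sub_coe_add_coe, sub_coe_add_coe]
  refine EReal.sub_le_sub le_rfl (EReal.coe_le_coe_iff.2 ?_)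
  have hsub := hv u
  rw [real_inner_comm] at hsub
  simp only [inner_sub_left, inner_sub_right] at hsub ⊢
  linarith

lemma exists_coe_eq_of_dcMajorant_ne {p : WithLp 2 (E × F)} (hbot : dcMajorant Q₁ Q₂ A p ≠ ⊥)
    (htop : dcMajorant Q₁ Q₂ A p ≠ ⊤) :
    (∃ r : ℝ, Q₁ p.fst = r) ∧ ∃ k : ℝ, conjE Q₂ p.snd = k := by
  unfold dcMajorant at hbot htop
  induction hQ : Q₁ p.fst with
  | bot => simp [hQ] at hbot
  | top => simp [hQ, EReal.top_add_of_ne_bot (conjE_ne_bot Q₂ p.snd)] at htop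
  | coe r =>
    induction hk : conjE Q₂ p.snd with
    | bot => exact absurd hk (conjE_ne_bot Q₂ p.snd)
    | top =>
      rw [hQ, hk, ← EReal.coe_sub, EReal.coe_add_top] at htop
      exact absurd rfl htop
    | coe k => exact ⟨⟨r, rfl⟩, k, rfl⟩

lemma FrechetSubgradAt.lift_dcMajorant {x v : E} {y : F}
    (h : FrechetSubgradAt (dcFun Q₁ Q₂ A) v x) (hy : ConvexSubgradAt Q₂ y (A x)) :
    FrechetSubgradAt (dcMajorant Q₁ Q₂ A) (WithLp.toLp 2 (v, 0)) (WithLp.toLp 2 (x, y)) := by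
  have hfst : LipschitzWith 1 (WithLp.fst : WithLp 2 (E × F) → E) :=
    LipschitzWith.of_edist_le fun p p' => WithLp.edist_fst_le p p'
  have hcylinder : FrechetSubgradAt (fun p : WithLp 2 (E × F) => dcFun Q₁ Q₂ A p.fst)
      (WithLp.toLp 2 (v, 0)) (WithLp.toLp 2 (x, y)) :=
    FrechetSubgradAt.comp_nonexpansive h hfst fun p => by simp [WithLp.prod_inner_apply]
  exact hcylinder.of_le dcFun_le_dcMajorant (dcMajorant_eq_dcFun hy)

lemma nonempty_limSubdiff_dcMajorant (hqc : Continuous q)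
    (hq : ∀ u, ConvexSubgradAt Q₂ (q u) u) {x : E} (h : (limSubdiff (dcFun Q₁ Q₂ A) x).Nonempty) :
    (limSubdiff (dcMajorant Q₁ Q₂ A) (WithLp.toLp 2 (x, q (A x)))).Nonempty := by
  obtain ⟨v, xs, vs, hxs, hfs, hvs, hsub⟩ := h
  have hgraph : Continuous fun z : E => WithLp.toLp 2 (z, q (A z)) := by fun_prop
  have hzero : Continuous fun z : E => WithLp.toLp 2 (z, (0 : F)) := by fun_prop
  refine ⟨WithLp.toLp 2 (v, 0), fun k => WithLp.toLp 2 (xs k, q (A (xs k))),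
    fun k => WithLp.toLp 2 (vs k, 0), (hgraph.tendsto x).comp hxs, ?_, (hzero.tendsto v).comp hvs,
    fun k => (hsub k).lift_dcMajorant (hq _)⟩
  simpa only [dcMajorant_eq_dcFun (hq _)] using hfs

lemma FrechetSubgradAt.slice_fst {f : WithLp 2 (E × F) → EReal} {p w : WithLp 2 (E × F)}
    (h : FrechetSubgradAt f w p) :
    FrechetSubgradAt (fun x => f (WithLp.toLp 2 (x, p.snd))) w.fst p.fst :=
  FrechetSubgradAt.comp_nonexpansive (φ := fun x => WithLp.toLp 2 (x, p.snd)) h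
    (isometry_toLp_left p.snd).lipschitz fun x => by simp [WithLp.prod_inner_apply]

lemma FrechetSubgradAt.slice_snd {f : WithLp 2 (E × F) → EReal} {p w : WithLp 2 (E × F)}
    (h : FrechetSubgradAt f w p) :
    FrechetSubgradAt (fun y => f (WithLp.toLp 2 (p.fst, y))) w.snd p.snd :=
  FrechetSubgradAt.comp_nonexpansive (φ := fun y => WithLp.toLp 2 (p.fst, y)) h
    (isometry_toLp_right p.fst).lipschitz fun y => by simp [WithLp.prod_inner_apply]

lemma hasGradientAt_comp_clm [CompleteSpace E] [CompleteSpace F] {φ : F → ℝ} {u : F} {x : E}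
    (A : E →L[ℝ] F) (h : HasGradientAt φ u (A x)) :
    HasGradientAt (fun z => φ (A z)) (A.adjoint u) x := by
  rw [hasGradientAt_iff_hasFDerivAt]
  refine (h.hasFDerivAt.comp x A.hasFDerivAt).congr_fderiv ?_
  ext z
  simp [ContinuousLinearMap.adjoint_inner_left]

lemma hasGradientAt_inner_sub_const [CompleteSpace F] (u : F) (c : ℝ) (y : F) :
    HasGradientAt (fun z => ⟪u, z⟫ - c) u y :=
  (innerSL ℝ u).hasFDerivAt.sub_const c

variable [CompleteSpace F] {p w : WithLp 2 (E × F)}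

lemma FrechetSubgradAt.conjE_of_dcMajorant (h : FrechetSubgradAt (dcMajorant Q₁ Q₂ A) w p)
    {r : ℝ} (hr : Q₁ p.fst = r) : FrechetSubgradAt (conjE Q₂) (w.snd + A p.fst) p.snd := by
  convert h.slice_snd.add_hasGradientAt (hasGradientAt_inner_sub_const (A p.fst) r p.snd)
    using 1
  funext y
  simp only [dcMajorant, WithLp.toLp_fst, WithLp.toLp_snd]
  rw [hr, ← EReal.coe_sub, add_right_comm, ← EReal.coe_add, sub_add_sub_cancel', sub_self]
  simp

lemma FrechetSubgradAt.dcFun_of_dcMajorant [CompleteSpace E]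
    (h : FrechetSubgradAt (dcMajorant Q₁ Q₂ A) w p) {k : ℝ} (hk : conjE Q₂ p.snd = k) {v : F}
    (hv : HasGradientAt Q₂ v (A p.fst)) :
    FrechetSubgradAt (dcFun Q₁ Q₂ A) (w.fst + A.adjoint (p.snd - v)) p.fst := by
  have hgrad : HasGradientAt (fun u => ⟪p.snd, u⟫ - k - Q₂ u) (p.snd - v) (A p.fst) := by
    rw [hasGradientAt_iff_hasFDerivAt, map_sub]
    exact (hasGradientAt_inner_sub_const p.snd k _).hasFDerivAt.sub hv.hasFDerivAt
  convert h.slice_fst.add_hasGradientAt (hasGradientAt_comp_clm A hgrad) using 1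
  funext x
  simp only [dcFun, dcMajorant, WithLp.toLp_fst, WithLp.toLp_snd]
  rw [hk, sub_coe_add_coe, sub_coe_add_coe, real_inner_comm]
  congr 2
  ring

/-- The `y`-component of the inclusion `w ∈ ∂H(x, y)` reads `A x + w₂ ∈ ∂Q₂*(y)`, which Fenchel
duality inverts. -/
lemma FrechetSubgradAt.convexSubgradAt_of_dcMajorant
    (h : FrechetSubgradAt (dcMajorant Q₁ Q₂ A) w p) (hbot : dcMajorant Q₁ Q₂ A p ≠ ⊥)
    (htop : dcMajorant Q₁ Q₂ A p ≠ ⊤) {v : F} (hv : ConvexSubgradAt Q₂ v (w.snd + A p.fst)) :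
    ConvexSubgradAt Q₂ p.snd (w.snd + A p.fst) := by
  obtain ⟨⟨r, hr⟩, k, hk⟩ := exists_coe_eq_of_dcMajorant_ne hbot htop
  exact ((h.conjE_of_dcMajorant hr).convexSubgradAtE (by simp [hk])
    (convex_epigraph_conjE Q₂)).convexSubgradAt_of_conjE hv

lemma FrechetSubgradAt.exists_dcFun_of_dcMajorant [CompleteSpace E] {K : NNReal}
    (h : FrechetSubgradAt (dcMajorant Q₁ Q₂ A) w p) (hbot : dcMajorant Q₁ Q₂ A p ≠ ⊥)
    (htop : dcMajorant Q₁ Q₂ A p ≠ ⊤) (hQ₂ : ConvexOn ℝ univ Q₂)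
    (hq : ∀ u, HasGradientAt Q₂ (q u) u) (hK : LipschitzWith K q) :
    ∃ v, FrechetSubgradAt (dcFun Q₁ Q₂ A) v p.fst ∧ ‖v‖ ≤ (1 + ‖A‖ * K) * ‖w‖ ∧
      dcMajorant Q₁ Q₂ A p ≤ dcFun Q₁ Q₂ A p.fst + ((K * ‖w‖ ^ 2 : ℝ) : EReal) := by
  have hsub : ∀ u, ConvexSubgradAt Q₂ (q u) u := fun u =>
    convexSubgradAt_of_convexOn hQ₂ (hq u)
  obtain ⟨-, k, hk⟩ := exists_coe_eq_of_dcMajorant_ne hbot htop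
  have hy := h.convexSubgradAt_of_dcMajorant hbot htop (hsub _)
  have hdual : ‖p.snd - q (A p.fst)‖ ≤ K * ‖w‖ := by
    rw [hy.eq_of_hasGradientAt (hq _)]
    calc ‖q (w.snd + A p.fst) - q (A p.fst)‖ ≤ K * ‖w.snd‖ := by
          simpa using hK.norm_sub_le (w.snd + A p.fst) (A p.fst)
      _ ≤ K * ‖w‖ := by gcongr; exact WithLp.norm_snd_le _ w
  refine ⟨_, h.dcFun_of_dcMajorant hk (hq _), ?_, ?_⟩
  · calc ‖w.fst + A.adjoint (p.snd - q (A p.fst))‖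
        ≤ ‖w.fst‖ + ‖A.adjoint‖ * ‖p.snd - q (A p.fst)‖ :=
          (norm_add_le _ _).trans (by gcongr; exact A.adjoint.le_opNorm _)
      _ ≤ ‖w‖ + ‖A‖ * (K * ‖w‖) := by
          rw [LinearIsometryEquiv.norm_map]
          gcongr
          exact WithLp.norm_fst_le _ w
      _ = (1 + ‖A‖ * K) * ‖w‖ := by ring
  · refine (dcMajorant_le_dcFun_add hy (hsub (A p.fst))).trans ?_
    rw [add_sub_cancel_right]
    gcongr
    calc ⟪w.snd, p.snd - q (A p.fst)⟫ ≤ ‖w.snd‖ * ‖p.snd - q (A p.fst)‖ := real_inner_le_norm _ _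
      _ ≤ ‖w‖ * (K * ‖w‖) := by gcongr; exact WithLp.norm_snd_le _ w
      _ = K * ‖w‖ ^ 2 := by ring

lemma FrechetKLExpAt.dcMajorant_of_dcFun [CompleteSpace E] {K : NNReal} {α : ℝ} {x₀ : E}
    (hα : α ∈ Ico (1 / 2) 1) (hQ₂ : ConvexOn ℝ univ Q₂) (hq : ∀ u, HasGradientAt Q₂ (q u) u)
    (hK : LipschitzWith K q) (h : FrechetKLExpAt (dcFun Q₁ Q₂ A) α x₀) :
    FrechetKLExpAt (dcMajorant Q₁ Q₂ A) α (WithLp.toLp 2 (x₀, q (A x₀))) := by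
  obtain ⟨C, hC, ε, hε, a, ha, hbound⟩ := h
  refine ⟨C * (1 + ‖A‖ * K) + a ^ (α - 1 / 2) * √K, by positivity, ε, hε, a, ha,
    fun p w hp hlow hhigh hw => ?_⟩
  obtain ⟨v, hv, hvw, hgap⟩ :=
    hw.exists_dcFun_of_dcMajorant hlow.ne_bot hhigh.ne_top hQ₂ hq hK
  rw [dcMajorant_eq_dcFun (convexSubgradAt_of_convexOn hQ₂ (hq _))] at hlow hhigh ⊢
  have hx : ‖p.fst - x₀‖ ≤ ε := (WithLp.norm_fst_le _ (p - WithLp.toLp 2 (x₀, _))).trans hp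
  refine rpow_toReal_sub_le_of_le_add hlow hhigh (dcFun_le_dcMajorant p) hgap (norm_nonneg w)
    (by positivity) K.coe_nonneg hα fun hlow' hhigh' => ?_
  calc ((dcFun Q₁ Q₂ A p.fst).toReal - (dcFun Q₁ Q₂ A x₀).toReal) ^ α
      ≤ C * ‖v‖ := hbound p.fst v hx hlow' hhigh' hv
    _ ≤ C * ((1 + ‖A‖ * K) * ‖w‖) := by gcongr
    _ = C * (1 + ‖A‖ * K) * ‖w‖ := by ring

end DCMajorant

theorem KL_exponent_half_transfer_to_majorant_general {E F : Type*}
    [NormedAddCommGroup E] [InnerProductSpace ℝ E] [CompleteSpace E]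
    [NormedAddCommGroup F] [InnerProductSpace ℝ F] [CompleteSpace F]
    (Q₁ : E → EReal) (Q₂ : F → ℝ) (q : F → F) (A : E →L[ℝ] F) {K : NNReal} {α : ℝ}
    (hα : α ∈ Ico (1 / 2) 1) (hQ₂ : ConvexOn ℝ univ Q₂) (hq : ∀ u, HasGradientAt Q₂ (q u) u)
    (hK : LipschitzWith K q) (x₀ : E) (hdom : (limSubdiff (dcFun Q₁ Q₂ A) x₀).Nonempty)
    (hKL : KLExpAt (dcFun Q₁ Q₂ A) α x₀) :
    (limSubdiff (dcMajorant Q₁ Q₂ A) (WithLp.toLp 2 (x₀, q (A x₀)))).Nonempty ∧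
    KLExpAt (dcMajorant Q₁ Q₂ A) α (WithLp.toLp 2 (x₀, q (A x₀))) :=
  ⟨nonempty_limSubdiff_dcMajorant hK.continuous
    (fun u => convexSubgradAt_of_convexOn hQ₂ (hq u)) hdom,
    ((hKL.frechetKLExpAt hα.2).dcMajorant_of_dcFun hα hQ₂ hq hK).klExpAt hα.2⟩

/-- Theorem 4.1: transfer of the KL exponent `1/2` from `h(x) = Q₁(x) - Q₂(Ax)` to the majorant
`H(x,y) = Q₁(x) - ⟨Ax, y⟩ + Q₂*(y)` at `(x̄, ∇Q₂(Ax̄))`. -/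
theorem KL_exponent_half_transfer_to_majorant
    {n m : ℕ} (Q₁ : Eucl n → EReal) (Q₂ : Eucl m → ℝ) (q' : Eucl m → Eucl m)
    (A : Eucl n →ₗ[ℝ] Eucl m)
    (hQ₁proper : (∀ x, Q₁ x ≠ ⊥) ∧ ∃ x, Q₁ x ≠ ⊤)
    (hQ₁closed : LowerSemicontinuous Q₁)
    (hQ₂conv : ConvexOn ℝ Set.univ Q₂)
    (hQ₂grad : ∀ u, HasGradientAt Q₂ (q' u) u)
    (hQ₂lip : ∃ ℓ ≥ (0:ℝ), ∀ u v, ‖q' u - q' v‖ ≤ ℓ * ‖u - v‖)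
    (xbar : Eucl n)
    (hdom : (limSubdiff (hFun Q₁ Q₂ A) xbar).Nonempty)
    (hKL : KLExpAt (hFun Q₁ Q₂ A) (1 / 2) xbar) :
    (limSubdiff (HFun Q₁ Q₂ A) (mkPr xbar (q' (A xbar)))).Nonempty ∧
    KLExpAt (HFun Q₁ Q₂ A) (1 / 2) (mkPr xbar (q' (A xbar))) := by
  obtain ⟨ℓ, hℓ, hlip⟩ := hQ₂lip
  exact KL_exponent_half_transfer_to_majorant_general Q₁ Q₂ q' A.toContinuousLinearMap
    (by norm_num) hQ₂conv hQ₂grad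
    (lipschitzWith_iff_norm_sub_le (C := ⟨ℓ, hℓ⟩) |>.2 hlip) xbar hdom hKL
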